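/- In dimension n = 1, if g is integrable with ∫_ℝ g dx ≠ 0, then the H^{-1} norm of g is infinite: sup over f ∈ C_0^∞(ℝ) of (∫ g f dx - ½‖f'‖_2²) = +∞. -/

import Mathlib

open MeasureTheory

/-!
In dimension one the Dirichlet energy of a dilate `φ (r * ·)` is `|r|` times that of `φ`, so it
vanishes as `r → 0`, while `∫ g x * φ (r * x)` tends to `(∫ g) * φ 0` by dominated convergence.
Spreading out a test function therefore makes `∫ g f - ½ ‖f'‖₂²` approach `(∫ g) * φ 0`, and this
limit is arbitrarily large because `φ 0` may be prescribed freely.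
-/

open Filter Topology
open scoped ContDiff

theorem tendsto_integral_smul_comp_smul_nhds_zero {𝕜 E F : Type*} [RCLike 𝕜]
    [AddCommGroup E] [Module ℝ E] [TopologicalSpace E] [ContinuousSMul ℝ E]
    [MeasurableSpace E] [OpensMeasurableSpace E]
    [NormedAddCommGroup F] [NormedSpace ℝ F] [NormedSpace 𝕜 F] [CompleteSpace F]
    [SecondCountableTopologyEither E F]
    {μ : Measure E} {g : E → 𝕜} {φ : E → F} {C : ℝ}
    (hg : Integrable g μ) (hφ : Continuous φ) (hφC : ∀ x, ‖φ x‖ ≤ C) :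
    Tendsto (fun r : ℝ => ∫ x, g x • φ (r • x) ∂μ) (𝓝 0) (𝓝 ((∫ x, g x ∂μ) • φ 0)) := by
  rw [← integral_smul_const]
  refine tendsto_integral_filter_of_dominated_convergence (fun x => ‖g x‖ * C)
    (.of_forall fun r => ?_) (.of_forall fun r => .of_forall fun x => ?_)
    (hg.norm.mul_const C) (.of_forall fun x => ?_)
  · exact hg.aestronglyMeasurable.smul
      (hφ.comp (continuous_const_smul r)).aestronglyMeasurable
  · rw [norm_smul]
    gcongr
    exact hφC _
  · have hcont : Continuous fun r : ℝ => g x • φ (r • x) := by fun_prop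
    simpa only [zero_smul] using hcont.tendsto 0

theorem integral_norm_deriv_comp_mul_left_sq {F : Type*} [NormedAddCommGroup F] [NormedSpace ℝ F]
    (φ : ℝ → F) (r : ℝ) :
    ∫ x, ‖deriv (fun y => φ (r * y)) x‖ ^ 2 = |r| * ∫ x, ‖deriv φ x‖ ^ 2 := by
  have hscale : r ^ 2 * |r⁻¹| = |r| := by
    rw [← sq_abs, abs_inv, sq, mul_self_mul_inv]
  calc ∫ x, ‖deriv (fun y => φ (r * y)) x‖ ^ 2
      = ∫ x, r ^ 2 * ‖deriv φ (r * x)‖ ^ 2 := by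
        simp only [deriv_comp_mul_left, norm_smul, mul_pow, Real.norm_eq_abs, sq_abs]
    _ = r ^ 2 * (|r⁻¹| * ∫ x, ‖deriv φ x‖ ^ 2) := by
        rw [integral_const_mul, Measure.integral_comp_mul_left (fun y => ‖deriv φ y‖ ^ 2),
          smul_eq_mul]
    _ = |r| * ∫ x, ‖deriv φ x‖ ^ 2 := by rw [← mul_assoc, hscale]

theorem exists_contDiff_hasCompactSupport_apply_eq {E F : Type*}
    [NormedAddCommGroup E] [NormedSpace ℝ E] [FiniteDimensional ℝ E]
    [NormedAddCommGroup F] [NormedSpace ℝ F] (x₀ : E) (c : F) :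
    ∃ φ : E → F, ContDiff ℝ ∞ φ ∧ HasCompactSupport φ ∧ φ x₀ = c := by
  let bump : ContDiffBump x₀ := default
  refine ⟨fun x => bump x • c, bump.contDiff.smul contDiff_const,
    bump.hasCompactSupport.smul_right, ?_⟩
  simp only [bump.one_of_mem_closedBall (Metric.mem_closedBall_self bump.rIn_pos.le), one_smul]

/-- The functional `f ↦ ∫ g f - ½ ‖f'‖₂²`, whose supremum over test functions is
`½ ‖g‖²` in the `H⁻¹` norm. The integrals are Bochner integrals, hence zero where they diverge. -/
noncomputable def hneg1Functional (g f : ℝ → ℝ) : ℝ :=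
  (∫ x, g x * f x) - (1 / 2) * ∫ x, (deriv f x) ^ 2

theorem hneg1Functional_comp_mul_left (g φ : ℝ → ℝ) (r : ℝ) :
    hneg1Functional g (fun x => φ (r * x)) =
      (∫ x, g x * φ (r * x)) - (1 / 2) * (|r| * ∫ x, (deriv φ x) ^ 2) := by
  have henergy := integral_norm_deriv_comp_mul_left_sq φ r
  simp only [Real.norm_eq_abs, sq_abs] at henergy
  rw [hneg1Functional, henergy]

theorem tendsto_hneg1Functional_comp_mul_left {g φ : ℝ → ℝ} {C : ℝ}
    (hg : Integrable g) (hφ : Continuous φ) (hφC : ∀ x, ‖φ x‖ ≤ C) :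
    Tendsto (fun r => hneg1Functional g (fun x => φ (r * x))) (𝓝 0) (𝓝 ((∫ x, g x) * φ 0)) := by
  simp only [hneg1Functional_comp_mul_left]
  have hpairing : Tendsto (fun r => ∫ x, g x * φ (r * x)) (𝓝 0) (𝓝 ((∫ x, g x) * φ 0)) :=
    tendsto_integral_smul_comp_smul_nhds_zero hg hφ hφC
  have henergy : Tendsto (fun r : ℝ => (1 / 2) * (|r| * ∫ x, (deriv φ x) ^ 2)) (𝓝 0) (𝓝 0) :=
    Continuous.tendsto' (by fun_prop) 0 0 (by simp)
  simpa only [sub_zero] using hpairing.sub henergy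

theorem exists_contDiff_hasCompactSupport_lt_hneg1Functional {g : ℝ → ℝ}
    (hg : Integrable g) (hgint : (∫ x, g x) ≠ 0) (M : ℝ) :
    ∃ f : ℝ → ℝ, ContDiff ℝ ∞ f ∧ HasCompactSupport f ∧ M < hneg1Functional g f := by
  obtain ⟨φ, hφ, hφ_supp, hφ_zero⟩ :=
    exists_contDiff_hasCompactSupport_apply_eq (0 : ℝ) ((M + 1) / ∫ x, g x)
  obtain ⟨C, hφC⟩ := hφ_supp.exists_bound_of_continuous hφ.continuous
  have hlim := tendsto_hneg1Functional_comp_mul_left hg hφ.continuous hφC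
  rw [hφ_zero, mul_div_cancel₀ _ hgint] at hlim
  have hlarge : ∀ᶠ r in 𝓝[≠] (0 : ℝ), M < hneg1Functional g (fun x => φ (r * x)) :=
    (hlim.mono_left nhdsWithin_le_nhds).eventually_const_lt (lt_add_one M)
  obtain ⟨r, hr, hr_ne⟩ := (hlarge.and eventually_mem_nhdsWithin).exists
  have hsmooth : ContDiff ℝ ∞ fun x => φ (r * x) := hφ.comp (contDiff_const.mul contDiff_id)
  have hsupp : HasCompactSupport fun x => φ (r * x) :=
    hφ_supp.comp_homeomorph (Homeomorph.mulLeft₀ r hr_ne)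
  exact ⟨fun x => φ (r * x), hsmooth, hsupp, hr⟩

/-- In dimension one, if `g` is integrable with `∫ g ≠ 0`, then the `H^{-1}`
norm of `g` is infinite:
`sup_{f ∈ C_0^∞(ℝ)} (∫ g f dx - ½ ‖f'‖_2²) = +∞`. -/
theorem Hneg1_infinite_of_integral_ne_zero
    (g : ℝ → ℝ) (hg : Integrable g) (hgint : (∫ x, g x) ≠ 0) :
    (⨆ f : {f : ℝ → ℝ // ContDiff ℝ (⊤ : ℕ∞) f ∧ HasCompactSupport f},
        (((∫ x, g x * (f : ℝ → ℝ) x) -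
          (1 / 2) * ∫ x, (deriv (f : ℝ → ℝ) x) ^ 2 : ℝ) : EReal)) = ⊤ := by
  rw [EReal.eq_top_iff_forall_lt]
  intro M
  obtain ⟨f, hf, hf_supp, hMf⟩ := exists_contDiff_hasCompactSupport_lt_hneg1Functional hg hgint M
  calc (M : EReal) < (hneg1Functional g f : EReal) := EReal.coe_lt_coe_iff.2 hMf
    _ ≤ _ := le_iSup_of_le ⟨f, hf, hf_supp⟩ le_rfl
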